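/- arXiv:2407.10697 — 2 statements merged into one kernel-verified Lean document; each statement's English description precedes it below -/
import Mathlib

section
/- Let d ≥ 5 be an integer and α > 0 a real number. Then the largest root of the Jacobi polynomial p_d^{α,α} satisfies t_{1,d}^{α,α} < sqrt(1−q_{d,α})·(1 − 3(α+1)^{4/3}/(2·d^{2/3}·(d+α+1)^{2/3}·(d+2α+1)^{2/3})), where q_{d,α} := (α²−1)/((d+α)(d+α+1)). -/
open MeasureTheory Filter Real

noncomputable section

/-- Generalized binomial coefficient `C(a, k)` for real `a`. -/
def genBinom (a : ℝ) (k : ℕ) : ℝ := (∏ i ∈ Finset.range k, (a - i)) / (Nat.factorial k : ℝ)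

/-- The Jacobi polynomial `p_d^{α,β}`, via the standard explicit formula; it is the degree-`d`
polynomial orthogonal to lower degrees for the weight `(1-t)^α (1+t)^β` on `[-1,1]`,
normalized by `p_d^{α,β}(1) = Γ(d+α+1)/(Γ(α+1)Γ(d+1))`. -/
def jacobiP (α β : ℝ) (d : ℕ) (x : ℝ) : ℝ :=
  ∑ s ∈ Finset.range (d + 1),
    genBinom ((d : ℝ) + α) (d - s) * genBinom ((d : ℝ) + β) s *
      ((x - 1) / 2) ^ s * ((x + 1) / 2) ^ (d - s)

/-- The largest root `t_{1,d}^{α,β}` of the Jacobi polynomial `p_d^{α,β}`. -/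
def maxRoot (α β : ℝ) (d : ℕ) : ℝ := sSup {x : ℝ | jacobiP α β d x = 0}

/-- `q_{d,α} = (α² - 1)/((d+α)(d+α+1))`. -/
def qda (d : ℕ) (α : ℝ) : ℝ := (α ^ 2 - 1) / (((d : ℝ) + α) * ((d : ℝ) + α + 1))

/-!
Let `x` be a root of `f = p_d^{α,α}`. Jacobi's differential equation determines the Taylor
coefficients of `f` at `x` up to a common factor. The roots are real and simple, by Rolle's theorem
applied inductively to `(1 - y)^(α+1) (1 + y)^(β+1) p_{d-1}^{α+1,β+1}(y)`, whose derivative is a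
weight times `p_d^{α,β}(y)`. So these coefficients are the elementary symmetric functions of the
numbers `(x - a)⁻¹`, with `a` running over the other roots, and Newton's identities make the power
sums `S₂, S₃, S₄` of these numbers explicit functions of `x`. Krasikov's observation is that
`S₃² ≤ S₂ S₄` then becomes a polynomial inequality in `x`, which fails close to `√(1 - q)`: writing
`x = √(1 - q) (1 - s)` and `A = α + 1`, it forces `27 A⁴ < 8 (d (d + α + 1) (d + 2α + 1))² s³`.
-/

section PowerSums

open Polynomial Finset

theorem coeff_prod_one_add_C_mul_X {ι R : Type*} [CommSemiring R] (s : Finset ι) (b : ι → R)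
    (k : ℕ) : (∏ i ∈ s, (1 + C (b i) * X)).coeff k = (s.val.map b).esymm k := by
  simp only [prod_one_add, prod_mul_distrib, prod_const, ← map_prod, finsetSum_coeff,
    coeff_C_mul_X_pow, esymm_map_val]
  rw [← sum_filter]
  refine sum_congr ?_ fun _ _ => rfl
  ext t
  simp only [mem_filter, mem_powerset, mem_powersetCard, eq_comm]

theorem sum_pow_eq_mul_esymm_sub_sum {ι R : Type*} [CommRing R] (s : Finset ι) (b : ι → R)
    {k : ℕ} (hk : 0 < k) :
    ∑ i ∈ s, b i ^ k = (-1) ^ (k + 1) * k * (s.val.map b).esymm k -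
      ∑ ij ∈ antidiagonal k with ij.1 ∈ Set.Ioo 0 k,
        (-1) ^ ij.1 * (s.val.map b).esymm ij.1 * ∑ i ∈ s, b i ^ ij.2 := by
  have esymm_eq (j : ℕ) : MvPolynomial.aeval (fun i : s => b i) (MvPolynomial.esymm s ℤ j) =
      (s.val.map b).esymm j := by
    rw [MvPolynomial.aeval_esymm_eq_multiset_esymm]
    congr 1
    exact Multiset.attach_map_val' s.val b
  have psum_eq (j : ℕ) : MvPolynomial.aeval (fun i : s => b i) (MvPolynomial.psum s ℤ j) =
      ∑ i ∈ s, b i ^ j := by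
    simp only [MvPolynomial.psum, map_sum, map_pow, MvPolynomial.aeval_X]
    exact sum_coe_sort s fun i => b i ^ j
  have newton := congrArg (MvPolynomial.aeval fun i : s => b i)
    (MvPolynomial.psum_eq_mul_esymm_sub_sum s ℤ k hk)
  simpa only [map_sub, map_mul, map_pow, map_neg, map_one, map_natCast, map_sum, esymm_eq,
    psum_eq] using newton

theorem esymm_one_eq_sum {ι R : Type*} [CommSemiring R] (s : Finset ι) (b : ι → R) :
    (s.val.map b).esymm 1 = ∑ i ∈ s, b i := by
  simp [esymm_map_val, powersetCard_one]

theorem sum_sq_eq_esymm {ι R : Type*} [CommRing R] (s : Finset ι) (b : ι → R) :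
    ∑ i ∈ s, b i ^ 2 = (s.val.map b).esymm 1 ^ 2 - 2 * (s.val.map b).esymm 2 := by
  have newton := sum_pow_eq_mul_esymm_sub_sum s b two_pos
  rw [show {ij ∈ antidiagonal 2 | ij.1 ∈ Set.Ioo 0 2} = {(1, 1)} by decide, sum_singleton] at newton
  simp only [pow_one, ← esymm_one_eq_sum s b] at newton
  push_cast at newton
  linear_combination newton

theorem sum_pow_three_eq_esymm {ι R : Type*} [CommRing R] (s : Finset ι) (b : ι → R) :
    ∑ i ∈ s, b i ^ 3 = (s.val.map b).esymm 1 ^ 3 -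
      3 * (s.val.map b).esymm 1 * (s.val.map b).esymm 2 + 3 * (s.val.map b).esymm 3 := by
  have newton := sum_pow_eq_mul_esymm_sub_sum s b three_pos
  rw [show {ij ∈ antidiagonal 3 | ij.1 ∈ Set.Ioo 0 3} = {(1, 2), (2, 1)} by decide,
    sum_pair (by decide)] at newton
  simp only [pow_one, ← esymm_one_eq_sum s b, sum_sq_eq_esymm] at newton
  push_cast at newton
  linear_combination newton

theorem sum_pow_four_eq_esymm {ι R : Type*} [CommRing R] (s : Finset ι) (b : ι → R) :
    ∑ i ∈ s, b i ^ 4 = (s.val.map b).esymm 1 ^ 4 -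
      4 * (s.val.map b).esymm 1 ^ 2 * (s.val.map b).esymm 2 + 2 * (s.val.map b).esymm 2 ^ 2 +
      4 * (s.val.map b).esymm 1 * (s.val.map b).esymm 3 - 4 * (s.val.map b).esymm 4 := by
  have newton := sum_pow_eq_mul_esymm_sub_sum s b four_pos
  rw [show {ij ∈ antidiagonal 4 | ij.1 ∈ Set.Ioo 0 4} = {(1, 3), (2, 2), (3, 1)} by decide,
    sum_insert (by decide), sum_pair (by decide)] at newton
  simp only [pow_one, ← esymm_one_eq_sum s b, sum_sq_eq_esymm, sum_pow_three_eq_esymm] at newton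
  push_cast at newton
  linear_combination newton

end PowerSums

section Taylor

open Polynomial Finset

/-- `f` solves Jacobi's equation `(1 - X²) f'' + (β - α - (α + β + 2) X) f' + l f = 0`; the
degree `d` Jacobi polynomial does so with `l = d (d + α + β + 1)`. -/
def SolvesJacobiODE {R : Type*} [CommRing R] (α β l : R) (f : R[X]) : Prop :=
  (1 - X ^ 2) * derivative (derivative f) + (C (β - α) - C (α + β + 2) * X) * derivative f +
    C l * f = 0

theorem taylor_derivative {R : Type*} [CommSemiring R] (x : R) (f : R[X]) :
    taylor x (derivative f) = derivative (taylor x f) := by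
  simp [taylor_apply, derivative_comp]

theorem coeff_X_mul_derivative {R : Type*} [CommSemiring R] (f : R[X]) (k : ℕ) :
    (X * derivative f).coeff k = k * f.coeff k := by
  cases k with
  | zero => simp
  | succ k => rw [coeff_X_mul, coeff_derivative, Nat.cast_succ, mul_comm]

theorem coeff_X_sq_mul_derivative_derivative {R : Type*} [CommRing R] (f : R[X]) (k : ℕ) :
    (X ^ 2 * derivative (derivative f)).coeff k = k * (k - 1) * f.coeff k := by
  have : X ^ 2 * derivative (derivative f) =
      X * derivative (X * derivative f) - X * derivative f := by
    rw [derivative_mul, derivative_X]; ring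
  rw [this, coeff_sub, coeff_X_mul_derivative, coeff_X_mul_derivative]
  ring

theorem SolvesJacobiODE.taylor_coeff_add_two {R : Type*} [CommRing R] {α β l : R} {f : R[X]}
    (hf : SolvesJacobiODE α β l f) (x : R) (k : ℕ) :
    (1 - x ^ 2) * ((k + 1) * (k + 2) * (taylor x f).coeff (k + 2)) =
      (k + 1) * ((2 * k + α + β + 2) * x + α - β) * (taylor x f).coeff (k + 1) +
        (k * (k + α + β + 1) - l) * (taylor x f).coeff k := by
  set g := taylor x f
  have ode : (1 - (X + C x) ^ 2) * derivative (derivative g) +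
      (C (β - α) - C (α + β + 2) * (X + C x)) * derivative g + C l * g = 0 := by
    have h := congrArg (taylor x) hf
    simpa only [map_add, map_sub, taylor_mul, taylor_pow, taylor_one, taylor_X, taylor_C,
      taylor_derivative, map_zero, map_one] using h
  have expanded : C (1 - x ^ 2) * derivative (derivative g) -
      C (2 * x) * (X * derivative (derivative g)) - X ^ 2 * derivative (derivative g) +
      C (β - α - (α + β + 2) * x) * derivative g - C (α + β + 2) * (X * derivative g) +
      C l * g = 0 := by
    rw [← ode]
    simp only [map_sub, map_add, map_mul, map_pow, map_one, map_ofNat]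
    ring
  have h := congrArg (coeff · k) expanded
  simp only [coeff_add, coeff_sub, coeff_C_mul, coeff_X_mul_derivative,
    coeff_X_sq_mul_derivative_derivative, coeff_derivative, coeff_zero] at h
  push_cast at h
  linear_combination h

/-- The `k`-th elementary symmetric function of the numbers `(x - a)⁻¹`, where `a` runs over the
roots of `f` other than `x`, each counted once. -/
def reciprocalEsymm {K : Type*} [Field K] [DecidableEq K] (f : K[X]) (x : K) (k : ℕ) : K :=
  ((f.roots.toFinset.erase x).val.map fun a => (x - a)⁻¹).esymm k

theorem reciprocalEsymm_zero {K : Type*} [Field K] [DecidableEq K] (f : K[X]) (x : K) :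
    reciprocalEsymm f x 0 = 1 := by
  simp [reciprocalEsymm, Multiset.esymm]

theorem taylor_coeff_succ_eq_reciprocalEsymm {K : Type*} [Field K] [DecidableEq K] {f : K[X]}
    (hf : f.Splits) (hnodup : f.roots.Nodup) {x : K} (hx : x ∈ f.roots) :
    ∃ c ≠ 0, ∀ k, (taylor x f).coeff (k + 1) =
      c * reciprocalEsymm f x k := by
  set T := f.roots.toFinset.erase x
  have hne : ∀ a ∈ T, x - a ≠ 0 := fun a ha => sub_ne_zero.mpr (ne_of_mem_erase ha).symm
  have hfac : f = C f.leadingCoeff * ((X - C x) * ∏ a ∈ T, (X - C a)) := by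
    rw [mul_prod_erase _ (fun a => X - C a) (Multiset.mem_toFinset.mpr hx), Finset.prod,
      Multiset.toFinset_val, hnodup.dedup, ← hf.eq_prod_roots]
  have htaylor : taylor x f =
      C (f.leadingCoeff * ∏ a ∈ T, (x - a)) * (X * ∏ a ∈ T, (1 + C (x - a)⁻¹ * X)) := by
    have hlin : ∏ a ∈ T, taylor x (X - C a) =
        (∏ a ∈ T, C (x - a)) * ∏ a ∈ T, (1 + C (x - a)⁻¹ * X) := by
      rw [← prod_mul_distrib]
      refine prod_congr rfl fun a ha => ?_
      rw [mul_add, ← mul_assoc, ← C_mul, mul_inv_cancel₀ (hne a ha), map_sub, taylor_X, taylor_C,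
        C_sub, C_1]
      ring
    conv_lhs => rw [hfac]
    rw [taylor_mul, taylor_mul, taylor_C, map_sub, taylor_X, taylor_C, add_sub_cancel_right]
    have hprod : taylor x (∏ a ∈ T, (X - C a)) = ∏ a ∈ T, taylor x (X - C a) :=
      map_prod (taylorAlgHom x) _ _
    rw [hprod, hlin, C_mul, map_prod]
    ring
  refine ⟨f.leadingCoeff * ∏ a ∈ T, (x - a), ?_, fun k => ?_⟩
  · exact mul_ne_zero (leadingCoeff_ne_zero.mpr (ne_zero_of_mem_roots hx))
      (prod_ne_zero_iff.mpr hne)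
  · rw [htaylor, coeff_C_mul, coeff_X_mul, coeff_prod_one_add_C_mul_X, reciprocalEsymm]

end Taylor

section Krasikov

open Polynomial Finset

variable {K : Type*} [Field K]

section Field

variable [DecidableEq K]

theorem SolvesJacobiODE.reciprocalEsymm_one {α β l : K} {f : K[X]}
    (hode : SolvesJacobiODE α β l f) (hsplits : f.Splits) (hnodup : f.roots.Nodup) {x : K}
    (hx : x ∈ f.roots) :
    2 * (1 - x ^ 2) * reciprocalEsymm f x 1 = (α + β + 2) * x + α - β := by
  obtain ⟨c, hc, hcoeff⟩ := taylor_coeff_succ_eq_reciprocalEsymm hsplits hnodup hx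
  have h := hode.taylor_coeff_add_two x 0
  rw [hcoeff, hcoeff, taylor_coeff_zero, (isRoot_of_mem_roots hx).eq_zero,
    reciprocalEsymm_zero] at h
  refine mul_left_cancel₀ hc ?_
  push_cast at h
  linear_combination h

theorem SolvesJacobiODE.reciprocalEsymm_add_two {α β l : K} {f : K[X]}
    (hode : SolvesJacobiODE α β l f) (hsplits : f.Splits) (hnodup : f.roots.Nodup) {x : K}
    (hx : x ∈ f.roots) (k : ℕ) :
    (1 - x ^ 2) * ((k + 2) * (k + 3) * reciprocalEsymm f x (k + 2)) =
      (k + 2) * ((2 * k + α + β + 4) * x + α - β) * reciprocalEsymm f x (k + 1) +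
        ((k + 1) * (k + α + β + 2) - l) * reciprocalEsymm f x k := by
  obtain ⟨c, hc, hcoeff⟩ := taylor_coeff_succ_eq_reciprocalEsymm hsplits hnodup hx
  have h := hode.taylor_coeff_add_two x (k + 1)
  rw [hcoeff, hcoeff, hcoeff] at h
  refine mul_left_cancel₀ hc ?_
  push_cast at h
  linear_combination h

/-- The power sum `S_k = ∑ (x - a)⁻ᵏ` over the roots `a ≠ x` of `f`, each counted once. -/
def reciprocalPowerSum (f : K[X]) (x : K) (k : ℕ) : K :=
  ∑ a ∈ f.roots.toFinset.erase x, (x - a)⁻¹ ^ k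

theorem SolvesJacobiODE.reciprocalPowerSum_eq [CharZero K] {α l : K} {f : K[X]}
    (hode : SolvesJacobiODE α α l f) (hsplits : f.Splits) (hnodup : f.roots.Nodup) {x u : K}
    (hx : x ∈ f.roots) (hu : u = (1 - x ^ 2) ^ 2 * reciprocalPowerSum f x 2) :
    3 * u = l - 2 * (α + 1) - (l + (α + 1) ^ 2 + 2 * (α + 1)) * x ^ 2 ∧
    2 * ((1 - x ^ 2) ^ 3 * reciprocalPowerSum f x 3) =
      x * ((α + 1) ^ 2 + (α + 1) * (1 - x ^ 2) - 3 * u) ∧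
    5 * ((1 - x ^ 2) ^ 4 * reciprocalPowerSum f x 4) =
      u ^ 2 + u * (2 * (α + 1) * (1 + x ^ 2) + 3 + 9 * x ^ 2) -
        x ^ 2 * ((α + 1) ^ 2 * (5 - x ^ 2) + 4 * (α + 1) * (1 - x ^ 2)) := by
  have h1 := hode.reciprocalEsymm_one hsplits hnodup hx
  have recurrence := hode.reciprocalEsymm_add_two hsplits hnodup hx
  have h2 := recurrence 0
  have h3 := recurrence 1
  have h4 := recurrence 2
  rw [reciprocalEsymm_zero] at h2
  push_cast at h2 h3 h4
  set w := 1 - x ^ 2 with hw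
  set e := reciprocalEsymm f x
  have e1_eq : w * e 1 = (α + 1) * x := by linear_combination h1 / 2
  have e2_eq : w ^ 2 * e 2 = (4 * (α + 2) * (α + 1) * x ^ 2 + (2 * (α + 1) - l) * w) / 6 := by
    linear_combination (w * h2 + 4 * (α + 2) * x * e1_eq) / 6
  have e3_eq : w ^ 3 * e 3 =
      (6 * (α + 3) * x * (w ^ 2 * e 2) + (2 * (2 * α + 3) - l) * w * (w * e 1)) / 12 := by
    linear_combination w ^ 2 * h3 / 12
  have e4_eq : w ^ 4 * e 4 =
      (8 * (α + 4) * x * (w ^ 3 * e 3) + (3 * (2 * α + 4) - l) * w * (w ^ 2 * e 2)) / 20 := by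
    linear_combination w ^ 3 * h4 / 20
  have s2_eq : w ^ 2 * reciprocalPowerSum f x 2 = (w * e 1) ^ 2 - 2 * (w ^ 2 * e 2) := by
    rw [reciprocalPowerSum, sum_sq_eq_esymm]; simp only [e, reciprocalEsymm]; ring
  have s3_eq : w ^ 3 * reciprocalPowerSum f x 3 =
      (w * e 1) ^ 3 - 3 * (w * e 1) * (w ^ 2 * e 2) + 3 * (w ^ 3 * e 3) := by
    rw [reciprocalPowerSum, sum_pow_three_eq_esymm]; simp only [e, reciprocalEsymm]; ring
  have s4_eq : w ^ 4 * reciprocalPowerSum f x 4 =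
      (w * e 1) ^ 4 - 4 * (w * e 1) ^ 2 * (w ^ 2 * e 2) + 2 * (w ^ 2 * e 2) ^ 2 +
        4 * (w * e 1) * (w ^ 3 * e 3) - 4 * (w ^ 4 * e 4) := by
    rw [reciprocalPowerSum, sum_pow_four_eq_esymm]; simp only [e, reciprocalEsymm]; ring
  rw [s3_eq, s4_eq, hu, s2_eq, e4_eq, e3_eq, e2_eq, e1_eq, hw]
  refine ⟨?_, ?_, ?_⟩ <;> ring

end Field

section Ordered

variable [LinearOrder K] [IsStrictOrderedRing K]

theorem reciprocalPowerSum_three_sq_le (f : K[X]) (x : K) :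
    reciprocalPowerSum f x 3 ^ 2 ≤ reciprocalPowerSum f x 2 * reciprocalPowerSum f x 4 := by
  have cauchy_schwarz := sum_mul_sq_le_sq_mul_sq (f.roots.toFinset.erase x)
    (fun a => (x - a)⁻¹) (fun a => (x - a)⁻¹ ^ 2)
  simpa only [reciprocalPowerSum, ← pow_succ', ← pow_mul, Nat.reduceAdd, Nat.reduceMul]
    using cauchy_schwarz

theorem reciprocalPowerSum_two_pos {f : K[X]} (hf : f.roots.Nodup) {x : K}
    (hcard : 1 < f.roots.card) : 0 < reciprocalPowerSum f x 2 := by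
  refine sum_pos (fun a ha => ?_) ?_
  · have := inv_ne_zero (sub_ne_zero.mpr (ne_of_mem_erase ha).symm)
    positivity
  · rw [← card_pos]
    have := Multiset.toFinset_card_of_nodup hf
    have := pred_card_le_card_erase (s := f.roots.toFinset) (a := x)
    omega

theorem SolvesJacobiODE.krasikov_inequality {α l : K} {f : K[X]}
    (hode : SolvesJacobiODE α α l f) (hα : -1 < α) (hsplits : f.Splits) (hnodup : f.roots.Nodup)
    (hcard : 1 < f.roots.card) {x : K} (hx : x ∈ f.roots) :
    ∃ u > 0, 3 * u = l - 2 * (α + 1) - (l + (α + 1) ^ 2 + 2 * (α + 1)) * x ^ 2 ∧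
      5 * x ^ 2 * ((α + 1) ^ 2 + (α + 1) * (1 - x ^ 2) - 3 * u) ^ 2 ≤
        4 * u * (u ^ 2 + u * (2 * (α + 1) * (1 + x ^ 2) + 3 + 9 * x ^ 2) -
          x ^ 2 * ((α + 1) ^ 2 * (5 - x ^ 2) + 4 * (α + 1) * (1 - x ^ 2))) := by
  set w := 1 - x ^ 2 with hw
  set S := reciprocalPowerSum f x
  obtain ⟨hS2, hS3, hS4⟩ := hode.reciprocalPowerSum_eq hsplits hnodup hx rfl
  have hw0 : w ≠ 0 := by
    intro h
    have h1 := hode.reciprocalEsymm_one hsplits hnodup hx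
    have hx0 : (2 * (α + 1)) * x = 0 := by rw [← hw, h] at h1; linarith
    rw [(mul_eq_zero.mp hx0).resolve_left (by linarith)] at hw
    norm_num [hw] at h
  refine ⟨w ^ 2 * S 2, mul_pos (by positivity) (reciprocalPowerSum_two_pos hnodup hcard), hS2, ?_⟩
  rw [← hS4]
  calc 5 * x ^ 2 * ((α + 1) ^ 2 + (α + 1) * w - 3 * (w ^ 2 * S 2)) ^ 2
      = 5 * (x * ((α + 1) ^ 2 + (α + 1) * w - 3 * (w ^ 2 * S 2))) ^ 2 := by ring
    _ = 20 * (w ^ 3) ^ 2 * S 3 ^ 2 := by rw [← hS3]; ring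
    _ ≤ 20 * (w ^ 3) ^ 2 * (S 2 * S 4) := by
      gcongr; exact reciprocalPowerSum_three_sq_le f x
    _ = 4 * (w ^ 2 * S 2) * (5 * (w ^ 4 * S 4)) := by ring

end Ordered

end Krasikov

section JacobiPolynomial

open Polynomial Finset

theorem genBinom_zero (a : ℝ) : genBinom a 0 = 1 := by
  simp [genBinom]

theorem genBinom_succ_mul (a : ℝ) (k : ℕ) :
    genBinom a (k + 1) * (k + 1) = genBinom a k * (a - k) := by
  simp only [genBinom, prod_range_succ, Nat.factorial_succ]
  push_cast
  field_simp

theorem genBinom_pos {a : ℝ} {k : ℕ} (h : (k : ℝ) < a + 1) : 0 < genBinom a k := by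
  refine div_pos (prod_pos fun i hi => ?_) (by positivity)
  have : (i : ℝ) + 1 ≤ k := by exact_mod_cast mem_range.mp hi
  linarith

/-- The coefficient of `((X - 1) / 2) ^ i * ((X + 1) / 2) ^ j` in the Jacobi polynomial of degree
`i + j`. -/
def jacobiCoeff (α β : ℝ) (i j : ℕ) : ℝ :=
  genBinom (i + j + α) j * genBinom (i + j + β) i

theorem jacobiCoeff_succ_left (α β : ℝ) (i j : ℕ) :
    (i + 1) * jacobiCoeff α β (i + 1) j = (j + β + 1) * jacobiCoeff (α + 1) (β + 1) i j := by
  have h := genBinom_succ_mul (i + j + (β + 1)) i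
  simp only [jacobiCoeff, Nat.cast_succ, add_right_comm _ (1 : ℝ), ← add_assoc] at h ⊢
  linear_combination genBinom (i + j + α + 1) j * h

theorem jacobiCoeff_succ_right (α β : ℝ) (i j : ℕ) :
    (j + 1) * jacobiCoeff α β i (j + 1) = (i + α + 1) * jacobiCoeff (α + 1) (β + 1) i j := by
  have h := genBinom_succ_mul (i + j + (α + 1)) j
  simp only [jacobiCoeff, Nat.cast_succ, add_right_comm _ (1 : ℝ), ← add_assoc] at h ⊢
  linear_combination genBinom (i + j + β + 1) i * h

/-- The product `((X - 1) / 2) ^ i * ((X + 1) / 2) ^ j`, as a polynomial. -/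
def jacobiMonomial (i j : ℕ) : ℝ[X] :=
  (C (2⁻¹ : ℝ) * (X - 1)) ^ i * (C (2⁻¹ : ℝ) * (X + 1)) ^ j

theorem derivative_jacobiMonomial (i j : ℕ) :
    derivative (jacobiMonomial i j) =
      C (2⁻¹ : ℝ) * (i * jacobiMonomial (i - 1) j + j * jacobiMonomial i (j - 1)) := by
  simp only [jacobiMonomial, derivative_mul, derivative_pow, derivative_C, derivative_add,
    derivative_sub, derivative_X, derivative_one, map_natCast]
  ring

theorem two_mul_C_two_inv : (2 : ℝ[X]) * C (2⁻¹ : ℝ) = 1 := by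
  rw [← C_ofNat, ← C_mul, mul_inv_cancel₀ two_ne_zero, C_1]

theorem two_mul_jacobiMonomial_succ_left (i j : ℕ) :
    2 * jacobiMonomial (i + 1) j = (X - 1) * jacobiMonomial i j := by
  have succ_eq : jacobiMonomial (i + 1) j = C (2⁻¹ : ℝ) * (X - 1) * jacobiMonomial i j := by
    simp only [jacobiMonomial]; ring
  linear_combination 2 * succ_eq + (X - 1) * jacobiMonomial i j * two_mul_C_two_inv

theorem two_mul_jacobiMonomial_succ_right (i j : ℕ) :
    2 * jacobiMonomial i (j + 1) = (X + 1) * jacobiMonomial i j := by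
  have succ_eq : jacobiMonomial i (j + 1) = C (2⁻¹ : ℝ) * (X + 1) * jacobiMonomial i j := by
    simp only [jacobiMonomial]; ring
  linear_combination 2 * succ_eq + (X + 1) * jacobiMonomial i j * two_mul_C_two_inv

theorem X_sq_sub_one_mul_derivative_jacobiMonomial (i j : ℕ) :
    (X ^ 2 - 1 : ℝ[X]) * derivative (jacobiMonomial i j) =
      (i * (X + 1 : ℝ[X]) + j * (X - 1 : ℝ[X])) * jacobiMonomial i j := by
  have left : (X - 1 : ℝ[X]) * (i * jacobiMonomial (i - 1) j) = 2 * i * jacobiMonomial i j := by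
    cases i with
    | zero => simp
    | succ i =>
      rw [add_tsub_cancel_right]
      linear_combination -((i + 1 : ℕ) : ℝ[X]) * two_mul_jacobiMonomial_succ_left i j
  have right : (X + 1 : ℝ[X]) * (j * jacobiMonomial i (j - 1)) = 2 * j * jacobiMonomial i j := by
    cases j with
    | zero => simp
    | succ j =>
      rw [add_tsub_cancel_right]
      linear_combination -((j + 1 : ℕ) : ℝ[X]) * two_mul_jacobiMonomial_succ_right i j
  rw [derivative_jacobiMonomial]
  linear_combination C (2⁻¹ : ℝ) * (X + 1) * left + C (2⁻¹ : ℝ) * (X - 1) * right +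
    (i * (X + 1 : ℝ[X]) + j * (X - 1 : ℝ[X])) * jacobiMonomial i j * two_mul_C_two_inv

/-- The Jacobi polynomial `p_d^{α,β}` as an element of `ℝ[X]`; its evaluation is `jacobiP`. -/
def jacobiPoly (α β : ℝ) (d : ℕ) : ℝ[X] :=
  ∑ ij ∈ antidiagonal d, C (jacobiCoeff α β ij.1 ij.2) * jacobiMonomial ij.1 ij.2

theorem eval_jacobiPoly (α β : ℝ) (d : ℕ) (x : ℝ) :
    (jacobiPoly α β d).eval x = jacobiP α β d x := by
  rw [jacobiPoly, Finset.Nat.sum_antidiagonal_eq_sum_range_succ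
    (fun i j => C (jacobiCoeff α β i j) * jacobiMonomial i j), eval_finsetSum, jacobiP]
  refine sum_congr rfl fun i hi => ?_
  have hi : i ≤ d := mem_range_succ_iff.mp hi
  simp only [jacobiMonomial, jacobiCoeff, eval_mul, eval_C, eval_pow, eval_sub, eval_X, eval_one,
    eval_add, Nat.cast_sub hi, add_sub_cancel]
  ring

theorem sum_antidiagonal_succ_fst_mul {R : Type*} [CommSemiring R] (F : ℕ → ℕ → R) (m : ℕ) :
    ∑ ij ∈ antidiagonal (m + 1), ij.1 * F ij.1 ij.2 =
      ∑ ij ∈ antidiagonal m, (ij.1 + 1) * F (ij.1 + 1) ij.2 := by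
  simp [Finset.Nat.sum_antidiagonal_succ]

theorem sum_antidiagonal_succ_snd_mul {R : Type*} [CommSemiring R] (F : ℕ → ℕ → R) (m : ℕ) :
    ∑ ij ∈ antidiagonal (m + 1), ij.2 * F ij.1 ij.2 =
      ∑ ij ∈ antidiagonal m, (ij.2 + 1) * F ij.1 (ij.2 + 1) := by
  simp [Finset.Nat.sum_antidiagonal_succ']

theorem derivative_jacobiPoly_succ (α β : ℝ) (m : ℕ) :
    derivative (jacobiPoly α β (m + 1)) =
      C ((m + α + β + 2) / 2) * jacobiPoly (α + 1) (β + 1) m := by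
  have split : derivative (jacobiPoly α β (m + 1)) = C (2⁻¹ : ℝ) *
      (∑ ij ∈ antidiagonal (m + 1), (ij.1 : ℝ[X]) *
          (C (jacobiCoeff α β ij.1 ij.2) * jacobiMonomial (ij.1 - 1) ij.2) +
        ∑ ij ∈ antidiagonal (m + 1), (ij.2 : ℝ[X]) *
          (C (jacobiCoeff α β ij.1 ij.2) * jacobiMonomial ij.1 (ij.2 - 1))) := by
    rw [jacobiPoly, derivative_sum, ← sum_add_distrib, mul_sum]
    refine sum_congr rfl fun ij _ => ?_
    rw [derivative_C_mul, derivative_jacobiMonomial]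
    ring
  rw [split, sum_antidiagonal_succ_fst_mul
      (fun i j => C (jacobiCoeff α β i j) * jacobiMonomial (i - 1) j),
    sum_antidiagonal_succ_snd_mul
      (fun i j => C (jacobiCoeff α β i j) * jacobiMonomial i (j - 1)),
    ← sum_add_distrib, jacobiPoly, mul_sum, mul_sum]
  refine sum_congr rfl fun ⟨i, j⟩ hij => ?_
  have hm : (m : ℝ) = i + j := by exact_mod_cast (mem_antidiagonal.mp hij).symm
  have coeff_eq :
      2⁻¹ * ((i + 1) * jacobiCoeff α β (i + 1) j + (j + 1) * jacobiCoeff α β i (j + 1)) =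
        (m + α + β + 2) / 2 * jacobiCoeff (α + 1) (β + 1) i j := by
    rw [jacobiCoeff_succ_left, jacobiCoeff_succ_right, hm]
    ring
  have coeff_eq := congrArg C coeff_eq
  simp only [map_mul, map_add, map_natCast, map_one] at coeff_eq
  simp only [add_tsub_cancel_right]
  linear_combination jacobiMonomial i j * coeff_eq

theorem jacobiPoly_succ_eq (α β : ℝ) (m : ℕ) :
    C (2 * (m + 1) : ℝ) * jacobiPoly α β (m + 1) =
      (X ^ 2 - 1) * derivative (jacobiPoly (α + 1) (β + 1) m) +
        (C (α + 1) * (X + 1) + C (β + 1) * (X - 1)) * jacobiPoly (α + 1) (β + 1) m := by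
  have split : C (m + 1 : ℝ) * jacobiPoly α β (m + 1) =
      ∑ ij ∈ antidiagonal (m + 1), (ij.1 : ℝ[X]) *
          (C (jacobiCoeff α β ij.1 ij.2) * jacobiMonomial ij.1 ij.2) +
        ∑ ij ∈ antidiagonal (m + 1), (ij.2 : ℝ[X]) *
          (C (jacobiCoeff α β ij.1 ij.2) * jacobiMonomial ij.1 ij.2) := by
    rw [jacobiPoly, ← sum_add_distrib, mul_sum]
    refine sum_congr rfl fun ij hij => ?_
    rw [← add_mul, ← Nat.cast_add, mem_antidiagonal.mp hij]
    simp only [map_add, map_natCast, map_one, Nat.cast_succ]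
  rw [C_mul, mul_assoc, split, sum_antidiagonal_succ_fst_mul
      (fun i j => C (jacobiCoeff α β i j) * jacobiMonomial i j),
    sum_antidiagonal_succ_snd_mul
      (fun i j => C (jacobiCoeff α β i j) * jacobiMonomial i j),
    ← sum_add_distrib, jacobiPoly, derivative_sum, mul_sum, mul_sum, mul_sum, ← sum_add_distrib]
  refine sum_congr rfl fun ⟨i, j⟩ _ => ?_
  have left := congrArg C (jacobiCoeff_succ_left α β i j)
  have right := congrArg C (jacobiCoeff_succ_right α β i j)
  simp only [derivative_C_mul, map_mul, map_add, map_natCast, map_one, C_ofNat] at left right ⊢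
  linear_combination 2 * jacobiMonomial (i + 1) j * left + 2 * jacobiMonomial i (j + 1) * right +
    (j + C β + 1) * C (jacobiCoeff (α + 1) (β + 1) i j) * two_mul_jacobiMonomial_succ_left i j +
    (i + C α + 1) * C (jacobiCoeff (α + 1) (β + 1) i j) * two_mul_jacobiMonomial_succ_right i j -
    C (jacobiCoeff (α + 1) (β + 1) i j) * X_sq_sub_one_mul_derivative_jacobiMonomial i j

theorem solvesJacobiODE_jacobiPoly (α β : ℝ) (d : ℕ) :
    SolvesJacobiODE α β (d * (d + α + β + 1)) (jacobiPoly α β d) := by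
  cases d with
  | zero => simp [SolvesJacobiODE, jacobiPoly, jacobiMonomial]
  | succ m =>
    have raising := jacobiPoly_succ_eq α β m
    rw [SolvesJacobiODE, derivative_jacobiPoly_succ, derivative_C_mul]
    have eigenvalue : C (((m + 1 : ℕ) : ℝ) * ((m + 1 : ℕ) + α + β + 1)) =
        C ((m + α + β + 2) / 2) * C (2 * (m + 1) : ℝ) := by
      rw [← C_mul]; push_cast; congr 1; ring
    rw [eigenvalue, mul_assoc, raising]
    simp only [map_add, map_sub, map_one, map_ofNat]
    ring

theorem eval_one_jacobiPoly (α β : ℝ) (d : ℕ) : (jacobiPoly α β d).eval 1 = genBinom (d + α) d := by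
  rw [jacobiPoly, eval_finsetSum, sum_eq_single (0, d)]
  · norm_num [jacobiCoeff, jacobiMonomial, genBinom_zero]
  · rintro ⟨i, j⟩ hij hne
    have hi : i ≠ 0 := by
      rintro rfl
      exact hne (by rw [← mem_antidiagonal.mp hij, zero_add])
    simp [jacobiMonomial, hi]
  · simp

theorem jacobiPoly_ne_zero {α : ℝ} (hα : -1 < α) (β : ℝ) (d : ℕ) : jacobiPoly α β d ≠ 0 := by
  intro h
  have h1 := eval_one_jacobiPoly α β d
  rw [h, eval_zero] at h1
  exact (genBinom_pos (by linarith)).ne h1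

theorem natDegree_jacobiPoly_le (α β : ℝ) (d : ℕ) : (jacobiPoly α β d).natDegree ≤ d := by
  refine natDegree_sum_le_of_forall_le _ _ fun ij hij => ?_
  rw [← mem_antidiagonal.mp hij, jacobiMonomial]
  compute_degree

end JacobiPolynomial

section JacobiRoots

open Polynomial Finset

theorem hasDerivAt_weight_mul_jacobiPoly (α β : ℝ) (m : ℕ) {x : ℝ} (hx : x ∈ Set.Ioo (-1) 1) :
    HasDerivAt
      (fun y => (1 - y) ^ (α + 1) * (1 + y) ^ (β + 1) * (jacobiPoly (α + 1) (β + 1) m).eval y)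
      (-((1 - x) ^ α * (1 + x) ^ β * (2 * (m + 1) * (jacobiPoly α β (m + 1)).eval x))) x := by
  have h1 : 0 < 1 - x := by linarith [hx.2]
  have h2 : 0 < 1 + x := by linarith [hx.1]
  have left := ((hasDerivAt_id x).const_sub 1).rpow_const (p := α + 1) (.inl h1.ne')
  have right := ((hasDerivAt_id x).const_add 1).rpow_const (p := β + 1) (.inl h2.ne')
  refine ((left.mul right).mul ((jacobiPoly (α + 1) (β + 1) m).hasDerivAt x)).congr_deriv ?_
  have raising := congrArg (eval x) (jacobiPoly_succ_eq α β m)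
  simp only [eval_mul, eval_add, eval_sub, eval_C, eval_pow, eval_X, eval_one] at raising
  rw [raising]
  simp only [id, add_sub_cancel_right, rpow_add_one h1.ne', rpow_add_one h2.ne', Pi.mul_apply]
  ring

theorem exists_isRoot_jacobiPoly_succ_between {α β : ℝ} (hα : -1 < α) (hβ : -1 < β) {m : ℕ}
    {a c : ℝ} (hac : a < c) (ha : -1 ≤ a) (hc : c ≤ 1)
    (ha_root : ((X ^ 2 - 1) * jacobiPoly (α + 1) (β + 1) m).IsRoot a)
    (hc_root : ((X ^ 2 - 1) * jacobiPoly (α + 1) (β + 1) m).IsRoot c) :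
    ∃ z ∈ Set.Ioo a c, (jacobiPoly α β (m + 1)).IsRoot z := by
  set W : ℝ → ℝ := fun y =>
    (1 - y) ^ (α + 1) * (1 + y) ^ (β + 1) * (jacobiPoly (α + 1) (β + 1) m).eval y with hW
  have W_eq_zero {y : ℝ} (hy : ((X ^ 2 - 1) * jacobiPoly (α + 1) (β + 1) m).IsRoot y) :
      W y = 0 := by
    have factored : (1 - y) * (1 + y) * (jacobiPoly (α + 1) (β + 1) m).eval y = 0 := by
      simp only [IsRoot.def, eval_mul, eval_sub, eval_pow, eval_X, eval_one] at hy
      linear_combination -hy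
    have exponents_ne_zero : α + 1 ≠ 0 ∧ β + 1 ≠ 0 := ⟨by linarith, by linarith⟩
    rcases mul_eq_zero.mp factored with h | h
    · rcases mul_eq_zero.mp h with h | h <;> simp [hW, h, exponents_ne_zero]
    · simp [hW, h]
  have W_continuous : Continuous W := by
    have left : Continuous fun y : ℝ => (1 - y) ^ (α + 1) :=
      (continuous_const.sub continuous_id).rpow_const fun _ => .inr (by linarith)
    have right : Continuous fun y : ℝ => (1 + y) ^ (β + 1) :=
      (continuous_const.add continuous_id).rpow_const fun _ => .inr (by linarith)
    exact (left.mul right).mul (Polynomial.continuous _)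
  have mem_Ioo {z : ℝ} (hz : z ∈ Set.Ioo a c) : z ∈ Set.Ioo (-1) 1 :=
    Set.Ioo_subset_Ioo ha hc hz
  obtain ⟨z, hz, hz0⟩ := exists_hasDerivAt_eq_zero hac W_continuous.continuousOn
    ((W_eq_zero ha_root).trans (W_eq_zero hc_root).symm)
    fun y hy => hasDerivAt_weight_mul_jacobiPoly α β m (mem_Ioo hy)
  have h1 : 0 < 1 - z := by linarith [(mem_Ioo hz).2]
  have h2 : 0 < 1 + z := by linarith [(mem_Ioo hz).1]
  refine ⟨z, hz, ?_⟩
  have weight_pos : 0 < (1 - z) ^ α * (1 + z) ^ β * (2 * (m + 1)) := by positivity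
  rw [neg_eq_zero, ← mul_assoc] at hz0
  exact (mul_eq_zero.mp hz0).resolve_left weight_pos.ne'

theorem le_card_roots_jacobiPoly_Ioo {α β : ℝ} (hα : -1 < α) (hβ : -1 < β) (d : ℕ) :
    d ≤ #{x ∈ (jacobiPoly α β d).roots.toFinset | x ∈ Set.Ioo (-1) 1} := by
  induction d generalizing α β with
  | zero => exact Nat.zero_le _
  | succ m ih =>
    have ih := ih (α := α + 1) (β := β + 1) (by linarith) (by linarith)
    set b := jacobiPoly (α + 1) (β + 1) m
    set interior := {x ∈ b.roots.toFinset | x ∈ Set.Ioo (-1) 1} with h_interior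
    have node {x : ℝ} (hx : x ∈ insert (-1) (insert 1 interior)) :
        (-1 ≤ x ∧ x ≤ 1) ∧ ((X ^ 2 - 1) * b).IsRoot x := by
      rw [mem_insert, mem_insert, h_interior, mem_filter, Multiset.mem_toFinset] at hx
      rcases hx with rfl | rfl | ⟨hx_root, hx⟩
      · norm_num
      · norm_num
      · exact ⟨⟨hx.1.le, hx.2.le⟩, root_mul_left_of_isRoot _ (isRoot_of_mem_roots hx_root)⟩
    have interleaved : #(insert (-1) (insert 1 interior)) ≤
        #{x ∈ (jacobiPoly α β (m + 1)).roots.toFinset | x ∈ Set.Ioo (-1) 1} + 1 := by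
      refine card_le_of_interleaved fun x hx y hy hxy _ => ?_
      obtain ⟨⟨hx_ge, -⟩, hx_root⟩ := node hx
      obtain ⟨⟨-, hy_le⟩, hy_root⟩ := node hy
      obtain ⟨z, hz, hz_root⟩ :=
        exists_isRoot_jacobiPoly_succ_between hα hβ hxy hx_ge hy_le hx_root hy_root
      refine ⟨z, ?_, hz⟩
      rw [mem_filter, Multiset.mem_toFinset, mem_roots (jacobiPoly_ne_zero hα _ _)]
      exact ⟨hz_root, Set.Ioo_subset_Ioo hx_ge hy_le hz⟩
    have one_notMem : (1 : ℝ) ∉ interior := by simp [h_interior]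
    have neg_one_notMem : (-1 : ℝ) ∉ insert 1 interior := by norm_num [h_interior]
    rw [card_insert_of_notMem neg_one_notMem, card_insert_of_notMem one_notMem] at interleaved
    omega

theorem card_roots_jacobiPoly {α β : ℝ} (hα : -1 < α) (hβ : -1 < β) (d : ℕ) :
    #(jacobiPoly α β d).roots.toFinset = d ∧ (jacobiPoly α β d).roots.card = d ∧
      (jacobiPoly α β d).natDegree = d := by
  have h1 := le_card_roots_jacobiPoly_Ioo hα hβ d
  have h2 := card_filter_le (jacobiPoly α β d).roots.toFinset (· ∈ Set.Ioo (-1) 1)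
  have h3 := Multiset.toFinset_card_le (jacobiPoly α β d).roots
  have h4 := card_roots' (jacobiPoly α β d)
  have h5 := natDegree_jacobiPoly_le α β d
  omega

theorem splits_jacobiPoly {α β : ℝ} (hα : -1 < α) (hβ : -1 < β) (d : ℕ) :
    (jacobiPoly α β d).Splits := by
  obtain ⟨-, hcard, hdegree⟩ := card_roots_jacobiPoly hα hβ d
  rw [splits_iff_card_roots, hcard, hdegree]

theorem nodup_roots_jacobiPoly {α β : ℝ} (hα : -1 < α) (hβ : -1 < β) (d : ℕ) :
    (jacobiPoly α β d).roots.Nodup := by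
  obtain ⟨hcard, hcard', -⟩ := card_roots_jacobiPoly hα hβ d
  exact Multiset.toFinset_card_eq_card_iff_nodup.mp (hcard.trans hcard'.symm)

theorem jacobiP_maxRoot {α β : ℝ} (hα : -1 < α) (hβ : -1 < β) {d : ℕ} (hd : 0 < d) :
    jacobiP α β d (maxRoot α β d) = 0 := by
  have roots_eq : {x | jacobiP α β d x = 0} = (jacobiPoly α β d).roots.toFinset := by
    ext x
    rw [mem_coe, Multiset.mem_toFinset, mem_roots (jacobiPoly_ne_zero hα β d), IsRoot.def,
      eval_jacobiPoly, Set.mem_ofPred_eq]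
  have nonempty : (jacobiPoly α β d).roots.toFinset.Nonempty := by
    rwa [← card_pos, (card_roots_jacobiPoly hα hβ d).1]
  have mem : maxRoot α β d ∈ {x | jacobiP α β d x = 0} := by
    rw [maxRoot, roots_eq]
    exact nonempty.csSup_mem
  exact mem

end JacobiRoots

section LargestRoot

open Polynomial

theorem four_le_of_cube_le {A X ρ : ℝ} (hX : 0 ≤ X) (hρ : 1 + X ≤ ρ)
    (h : ρ ^ 3 ≤ 121 / 100 * A * (X + 3 / 80 * ρ)) : 4 ≤ A := by
  by_contra! hA4
  have : ρ ^ 3 ≤ 484 / 100 * (X + 3 / 80 * ρ) :=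
    h.trans (mul_le_mul_of_nonneg_right (by linarith) (by linarith))
  have tangent : 0 ≤ (ρ - 13 / 10) ^ 2 * (ρ + 26 / 10) :=
    mul_nonneg (sq_nonneg _) (by linarith)
  linarith

theorem krasikov_inequality_normalized {A X p : ℝ} (hA : 4 ≤ A) (hX : 0 ≤ X) (hX1 : X ≤ 1)
    (hp : 0 < p)
    (h : 5 * X * (A ^ 2 + A * (1 - X) - 3 * (A * p)) ^ 2 ≤
      4 * (A * p) * ((A * p) ^ 2 + A * p * (2 * A * (1 + X) + 3 + 9 * X) -
        X * (A ^ 2 * (5 - X) + 4 * A * (1 - X)))) :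
    A * X ≤ 4 / 5 * (p ^ 3 + (11 / 4 + 2 * X) * p ^ 2 + (27 / 8 * X + X ^ 2) * p) := by
  have expanded : 5 / 4 * X * (A + 1 - X) ^ 2 ≤
      A * (p ^ 2 * (p + 2 + 2 * X)) + p ^ 2 * (3 - 9 / 4 * X) +
        X * p * (A * (5 / 2 + X) + 7 / 2 * (1 - X)) := by
    refine le_of_mul_le_mul_left ?_ (by positivity : 0 < 4 * A ^ 2)
    linarith
  have lower : 5 / 4 * X * A ^ 2 ≤ 5 / 4 * X * (A + 1 - X) ^ 2 := by gcongr; linarith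
  have upper : p ^ 2 * (3 - 9 / 4 * X) + X * p * (7 / 2 * (1 - X)) ≤
      A / 4 * (p ^ 2 * 3 + X * p * (7 / 2)) := by
    have : p ^ 2 * (3 - 9 / 4 * X) + X * p * (7 / 2 * (1 - X)) ≤ p ^ 2 * 3 + X * p * (7 / 2) := by
      gcongr <;> linarith
    refine this.trans (le_mul_of_one_le_left (by positivity) (by linarith))
  refine le_of_mul_le_mul_left ?_ (by positivity : 0 < A)
  linarith

theorem krasikov_inequality_false {A X p : ℝ} (hX : 0 ≤ X) (hX1 : X ≤ 1)
    (hp : 0 < p)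
    (h : 5 * X * (A ^ 2 + A * (1 - X) - 3 * (A * p)) ^ 2 ≤
      4 * (A * p) * ((A * p) ^ 2 + A * p * (2 * A * (1 + X) + 3 + 9 * X) -
        X * (A ^ 2 * (5 - X) + 4 * A * (1 - X))))
    {τ : ℝ} (hτ1 : τ ≤ 1) (hτA : τ ≤ A / 20)
    (hρ : (1 + X + p) ^ 3 ≤ 121 / 100 * (A * X + 3 / 4 * τ * (1 + X + p))) : False := by
  -- The cube bound enters twice: with `τ ≤ A / 20` it forces `4 ≤ A`, and for such `A` the
  -- inequality `h` caps `A * X` by so little that the bound with `τ ≤ 1` fails.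
  have hA4 : 4 ≤ A := by
    refine four_le_of_cube_le hX (by linarith) (hρ.trans ?_)
    calc 121 / 100 * (A * X + 3 / 4 * τ * (1 + X + p))
        ≤ 121 / 100 * (A * X + 3 / 4 * (A / 20) * (1 + X + p)) := by gcongr
      _ = 121 / 100 * A * (X + 3 / 80 * (1 + X + p)) := by ring
  have upper := krasikov_inequality_normalized hA4 hX hX1 hp h
  have absorbed : 3 / 4 * τ * (1 + X + p) ≤ 3 / 4 * (1 + X + p) := by
    gcongr; linarith
  have gap : 0 < (1 + X + p) ^ 3 - 121 / 100 * (4 / 5 * (p ^ 3 + (11 / 4 + 2 * X) * p ^ 2 +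
      (27 / 8 * X + X ^ 2) * p) + 3 / 4 * (1 + X + p)) := by
    ring_nf
    positivity
  linarith

theorem cube_le_of_cube_le {n A X s ρ L : ℝ} (hn : 0 < n) (hA : 0 < A) (hX : 0 ≤ X)
    (hρ : 0 ≤ ρ) (hs0 : 0 ≤ s) (hs2 : s ≤ 2) (hL : 10 * A ≤ L)
    (hX_eq : (n + A) * (n + A - 1) * X = (L + A) * (1 - s) ^ 2)
    (hρ_eq : 3 * (A * ρ) = (L + A) * (2 * s - s ^ 2))
    (hs : 8 * (L * (n + A)) ^ 2 * s ^ 3 ≤ 27 * A ^ 4) :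
    ρ ^ 3 ≤ 121 / 100 * (A * X + 3 / 4 * (A / (n + A)) ^ 2 * ρ) := by
  have hL0 : 0 < L := by linarith
  have cubic : (1 - s / 2) ^ 3 ≤ (1 - s) ^ 2 + (2 * s - s ^ 2) / 4 := by
    linarith [pow_nonneg hs0 3]
  refine le_of_mul_le_mul_left ?_ (by positivity : 0 < (L * (n + A)) ^ 2 * A ^ 3)
  calc (L * (n + A)) ^ 2 * A ^ 3 * ρ ^ 3
      = (L * (n + A)) ^ 2 * (3 * (A * ρ)) ^ 3 / 27 := by ring
    _ = 8 * (L * (n + A)) ^ 2 * s ^ 3 * ((L + A) ^ 3 * (2 - s) ^ 3) / 216 := by rw [hρ_eq]; ring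
    _ ≤ 27 * A ^ 4 * ((L + A) ^ 3 * (2 - s) ^ 3) / 216 := by gcongr
    _ = A ^ 4 * (L + A) ^ 3 * (1 - s / 2) ^ 3 := by ring
    _ ≤ A ^ 4 * (L + A) ^ 3 * ((1 - s) ^ 2 + (2 * s - s ^ 2) / 4) := by gcongr
    _ = A ^ 4 * (L + A) ^ 2 * ((L + A) * (1 - s) ^ 2 + (L + A) * (2 * s - s ^ 2) / 4) := by ring
    _ = A ^ 4 * (L + A) ^ 2 * ((n + A) * (n + A - 1) * X + 3 * (A * ρ) / 4) := by
      rw [hX_eq, hρ_eq]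
    _ ≤ A ^ 4 * (L + A) ^ 2 * ((n + A) * (n + A) * X + 3 * (A * ρ) / 4) := by
      gcongr; linarith
    _ ≤ A ^ 4 * (11 / 10 * L) ^ 2 * ((n + A) * (n + A) * X + 3 * (A * ρ) / 4) := by
      gcongr; linarith
    _ = (L * (n + A)) ^ 2 * A ^ 3 * (121 / 100 * (A * X + 3 / 4 * (A / (n + A)) ^ 2 * ρ)) := by
      field_simp; ring

theorem lt_cube_of_krasikov_inequality {n A x s u : ℝ} (hn : 5 ≤ n) (hA : 0 < A) (hu0 : 0 < u)
    (hs : (n + A) * (n + A - 1) * x ^ 2 = (n * (n + 2 * A - 1) + A) * (1 - s) ^ 2)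
    (hu : 3 * u = n * (n + 2 * A - 1) - 2 * A - (n * (n + 2 * A - 1) + A ^ 2 + 2 * A) * x ^ 2)
    (h : 5 * x ^ 2 * (A ^ 2 + A * (1 - x ^ 2) - 3 * u) ^ 2 ≤
      4 * u * (u ^ 2 + u * (2 * A * (1 + x ^ 2) + 3 + 9 * x ^ 2) -
        x ^ 2 * (A ^ 2 * (5 - x ^ 2) + 4 * A * (1 - x ^ 2)))) :
    27 * A ^ 4 < 8 * (n * (n + 2 * A - 1) * (n + A)) ^ 2 * s ^ 3 := by
  by_contra! hs3
  set X := x ^ 2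
  have hX : 0 ≤ X := sq_nonneg x
  obtain ⟨p, rfl⟩ : ∃ p, u = A * p := ⟨u / A, by field_simp⟩
  have hp : 0 < p := pos_of_mul_pos_right hu0 hA.le
  have hL : 10 * A ≤ n * (n + 2 * A - 1) :=
    calc 10 * A = 5 * (2 * A) := by ring
      _ ≤ n * (n + 2 * A - 1) := by gcongr; linarith
  set L := n * (n + 2 * A - 1)
  have hL0 : 0 < L := by linarith
  have hX1 : X ≤ 1 := by
    refine le_of_mul_le_mul_left ?_ (by positivity : 0 < L + A ^ 2 + 2 * A)
    linarith [sq_nonneg A]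
  -- The substitution that turns an upper bound for `s ^ 3` into one for `(1 + X + p) ^ 3`.
  have hρ_eq : 3 * (A * (1 + X + p)) = (L + A) * (2 * s - s ^ 2) := by
    linear_combination hu - hs
  have hs_prod : 0 < s * (2 - s) := by
    refine pos_of_mul_pos_right (a := L + A) ?_ (by linarith)
    calc 0 < 3 * (A * (1 + X + p)) := by positivity
      _ = (L + A) * (s * (2 - s)) := by rw [hρ_eq]; ring
  obtain ⟨hs0, hs2⟩ : 0 < s ∧ 0 < 2 - s := by
    rcases mul_pos_iff.mp hs_prod with h | h
    · exact h
    · linarith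
  have hτ1 : (A / (n + A)) ^ 2 ≤ 1 :=
    pow_le_one₀ (by positivity) (div_le_one_of_le₀ (by linarith) (by positivity))
  have hτA : (A / (n + A)) ^ 2 ≤ A / 20 := by
    rw [div_pow, div_le_div_iff₀ (by positivity) (by norm_num), sq A, mul_assoc]
    gcongr
    linarith [sq_nonneg (n - A), mul_le_mul_of_nonneg_right hn hA.le]
  exact krasikov_inequality_false hX hX1 hp h hτ1 hτA
    (cube_le_of_cube_le (by linarith) hA hX (by positivity) hs0.le (by linarith) hL hs hρ_eq hs3)

theorem mul_one_sub_qda {d : ℕ} {α : ℝ} (hα : -1 < α) (hd : 1 ≤ d) :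
    (d + (α + 1)) * (d + (α + 1) - 1) * (1 - qda d α) = d * (d + 2 * (α + 1) - 1) + (α + 1) := by
  have hd : (1 : ℝ) ≤ d := by exact_mod_cast hd
  have h1 : d + α ≠ 0 := by linarith
  have h2 : d + α + 1 ≠ 0 := by linarith
  rw [qda]
  field_simp
  ring

theorem rpow_div_three_pow_three {y : ℝ} (hy : 0 ≤ y) (k : ℕ) :
    (y ^ ((k : ℝ) / 3)) ^ 3 = y ^ k := by
  rw [← rpow_mul_natCast hy, Nat.cast_ofNat, div_mul_cancel₀ _ three_ne_zero, rpow_natCast]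

theorem cube_rpow_div_rpow {A a b c : ℝ} (hA : 0 ≤ A) (ha : 0 ≤ a) (hb : 0 ≤ b) (hc : 0 ≤ c) :
    (3 * A ^ ((4 : ℝ) / 3) / (2 * a ^ ((2 : ℝ) / 3) * b ^ ((2 : ℝ) / 3) * c ^ ((2 : ℝ) / 3))) ^ 3 =
      27 * A ^ 4 / (8 * (a * c * b) ^ 2) := by
  have hA4 := rpow_div_three_pow_three hA 4
  have ha2 := rpow_div_three_pow_three ha 2
  have hb2 := rpow_div_three_pow_three hb 2
  have hc2 := rpow_div_three_pow_three hc 2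
  simp only [Nat.cast_ofNat] at hA4 ha2 hb2 hc2
  rw [div_pow, mul_pow, mul_pow, mul_pow, mul_pow, hA4, ha2, hb2, hc2]
  congr 1 <;> ring

theorem lt_cube_of_jacobiP_eq_zero {d : ℕ} (hd : 5 ≤ d) {α : ℝ} (hα : -1 < α) {x : ℝ}
    (hx : jacobiP α α d x = 0) (hq : 0 < 1 - qda d α) :
    27 * (α + 1) ^ 4 < 8 * (d * (d + 2 * (α + 1) - 1) * (d + (α + 1))) ^ 2 *
      (1 - x / √(1 - qda d α)) ^ 3 := by
  have hx_root : x ∈ (jacobiPoly α α d).roots := by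
    rwa [mem_roots (jacobiPoly_ne_zero hα α d), IsRoot.def, eval_jacobiPoly]
  have one_lt_card : 1 < (jacobiPoly α α d).roots.card := by
    rw [(card_roots_jacobiPoly hα hα d).2.1]; omega
  obtain ⟨u, hu0, hu, krasikov⟩ := (solvesJacobiODE_jacobiPoly α α d).krasikov_inequality hα
    (splits_jacobiPoly hα hα d) (nodup_roots_jacobiPoly hα hα d) one_lt_card hx_root
  refine lt_cube_of_krasikov_inequality (by exact_mod_cast hd) (by linarith) hu0 ?_
    (by linear_combination hu) krasikov
  rw [sub_sub_cancel, div_pow, Real.sq_sqrt hq.le, ← mul_one_sub_qda hα (by omega)]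
  field_simp

theorem jacobiP_root_lt {d : ℕ} (hd : 5 ≤ d) {α : ℝ} (hα : -1 < α) {x : ℝ}
    (hx : jacobiP α α d x = 0) :
    x < Real.sqrt (1 - qda d α) *
        (1 - 3 * (α + 1) ^ ((4 : ℝ) / 3) /
          (2 * (d : ℝ) ^ ((2 : ℝ) / 3) * ((d : ℝ) + α + 1) ^ ((2 : ℝ) / 3) *
            ((d : ℝ) + 2 * α + 1) ^ ((2 : ℝ) / 3))) := by
  have hn : (5 : ℝ) ≤ d := by exact_mod_cast hd
  have hq : 0 < 1 - qda d α := by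
    refine pos_of_mul_pos_right (a := (d + (α + 1)) * (d + (α + 1) - 1)) ?_
      (mul_pos (by linarith) (by linarith)).le
    rw [mul_one_sub_qda hα (by omega)]
    exact add_pos (mul_pos (by linarith) (by linarith)) (by linarith)
  set r := Real.sqrt (1 - qda d α)
  set δ := 3 * (α + 1) ^ ((4 : ℝ) / 3) / (2 * (d : ℝ) ^ ((2 : ℝ) / 3) *
    ((d : ℝ) + α + 1) ^ ((2 : ℝ) / 3) * ((d : ℝ) + 2 * α + 1) ^ ((2 : ℝ) / 3)) with hδ
  have hr0 : 0 < r := Real.sqrt_pos.mpr hq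
  have δ_lt : δ < 1 - x / r := by
    refine (Odd.strictMono_pow (n := 3) ⟨1, rfl⟩).lt_iff_lt.mp ?_
    have base_pos : 0 < d * (d + 2 * (α + 1) - 1) * (d + (α + 1)) :=
      mul_pos (mul_pos (by linarith) (by linarith)) (by linarith)
    calc δ ^ 3 = 27 * (α + 1) ^ 4 / (8 * (d * (d + 2 * (α + 1) - 1) * (d + (α + 1))) ^ 2) := by
          rw [hδ, cube_rpow_div_rpow (by linarith) (by linarith) (by linarith) (by linarith)]
          ring
      _ < (1 - x / r) ^ 3 := by
          rw [div_lt_iff₀' (by positivity)]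
          exact lt_cube_of_jacobiP_eq_zero hd hα hx hq
  calc x = r * (1 - (1 - x / r)) := by field_simp; ring
    _ < r * (1 - δ) := by gcongr

theorem jacobi_max_root_upper_bound_general (d : ℕ) (hd : 5 ≤ d) (α : ℝ) (hα : -1 < α) :
    maxRoot α α d <
      Real.sqrt (1 - qda d α) *
        (1 - 3 * (α + 1) ^ ((4 : ℝ) / 3) /
          (2 * (d : ℝ) ^ ((2 : ℝ) / 3) * ((d : ℝ) + α + 1) ^ ((2 : ℝ) / 3) *
            ((d : ℝ) + 2 * α + 1) ^ ((2 : ℝ) / 3))) :=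
  jacobiP_root_lt hd hα (jacobiP_maxRoot hα hα (by omega))

end LargestRoot

/-- Krasikov's bound on the largest Jacobi root. -/
theorem jacobi_max_root_upper_bound (d : ℕ) (hd : 5 ≤ d) (α : ℝ) (hα : 0 < α) :
    maxRoot α α d <
      Real.sqrt (1 - qda d α) *
        (1 - 3 * (α + 1) ^ ((4 : ℝ) / 3) /
          (2 * (d : ℝ) ^ ((2 : ℝ) / 3) * ((d : ℝ) + α + 1) ^ ((2 : ℝ) / 3) *
            ((d : ℝ) + 2 * α + 1) ^ ((2 : ℝ) / 3))) :=
  jacobi_max_root_upper_bound_general d hd α (by linarith)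
end
end

section
/- For every K ≥ 1 and ε ∈ (0,1) there exists C > 0 with the following property. Let n be a positive integer, d ≥ 2 an even integer and α ≥ sqrt(7/6) a real with d ≤ Kn, α ≤ Kn and q_{d,α} ∈ [ε, 1), and set s' := t_{1,d}^{α,α}. If 1−q_{d,α}−s'² ≥ n^{−2/3}, then for every x ∈ [0, sqrt(1−q_{d,α})] with 1−q_{d,α}−x² ≥ n^{−2/3} one has |ω_{d,α}(x) − ω_{d,α}(s') − A·(x−s') − B·(x−s')²| ≤ C·n²·|x−s'|³, where A := sqrt((d+α)(d+α+1))·sqrt(1−q_{d,α}−s'²)/(1−s'²) and B := s'·sqrt((d+α)(d+α+1))·(1−2q_{d,α}−s'²)/(2·sqrt(1−q_{d,α}−s'²)·(1−s'²)²). -/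
/-!
For `y ≥ 0` the phase `ω` equals `√((d + α)(d + α + 1))` times an odd function built from
arcsines, with derivative `√(1 - q - y²) / (1 - y²)`. Since `1 - y² ≥ q ≥ ε`, the only
singularity is the turning point `1 - q - y² = 0`, near which the third derivative is
`O((1 - q - y²) ^ (-3 / 2))`; this is `O(n)` as long as `1 - q - y² ≥ n ^ (-2 / 3)`. That
condition describes a convex set of `y`, hence holds on the whole segment between `s'` and `x`, and
Lagrange's remainder together with `√((d + α)(d + α + 1)) = O(n)` gives `O(n² |x - s'|³)`.
-/

open MeasureTheory Filter Real

noncomputable section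

/-- The phase function `ω_{d,α}`. -/
def omegada (d : ℕ) (α : ℝ) (x : ℝ) : ℝ :=
  Real.sqrt (((d : ℝ) + α) * ((d : ℝ) + α + 1)) *
    (Real.arccos (Real.sqrt ((1 - qda d α - x ^ 2) / (1 - qda d α))) -
      Real.sqrt (qda d α) *
        Real.arccos (Real.sqrt ((1 - qda d α - x ^ 2) / ((1 - qda d α) * (1 - x ^ 2)))))

section Taylor

theorem iteratedDerivWithin_eqOn_of_forall_hasDerivWithinAt {𝕜 E : Type*}
    [NontriviallyNormedField 𝕜] [NormedAddCommGroup E] [NormedSpace 𝕜 E] {F : ℕ → 𝕜 → E}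
    {S : Set 𝕜} {n : ℕ} (hS : UniqueDiffOn 𝕜 S)
    (hF : ∀ k < n, ∀ y ∈ S, HasDerivWithinAt (F k) (F (k + 1) y) S y) :
    ∀ k ≤ n, Set.EqOn (iteratedDerivWithin k (F 0) S) (F k) S := by
  intro k
  induction k with
  | zero => exact fun _ y _ ↦ by rw [iteratedDerivWithin_zero]
  | succ k ih =>
    intro hk y hy
    have heq := ih (by omega)
    rw [iteratedDerivWithin_succ, derivWithin_congr heq (heq hy)]
    exact (hF k hk y hy).derivWithin (hS y hy)

theorem abs_sub_taylor_sum_le {F : ℕ → ℝ → ℝ} {n : ℕ} {a x M : ℝ}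
    (hF : ∀ k ≤ n, ∀ y ∈ Set.uIcc a x, HasDerivWithinAt (F k) (F (k + 1) y) (Set.uIcc a x) y)
    (hM : ∀ y ∈ Set.uIcc a x, |F (n + 1) y| ≤ M) :
    |F 0 x - ∑ k ∈ Finset.range (n + 1), F k a * (x - a) ^ k / k.factorial| ≤
      M * |x - a| ^ (n + 1) / (n + 1).factorial := by
  rcases eq_or_ne a x with rfl | hax
  · simp [Finset.sum_range_succ']
  have hiter := iteratedDerivWithin_eqOn_of_forall_hasDerivWithinAt (n := n + 1)
    (uniqueDiffOn_uIcc hax) fun k hk ↦ hF k (by omega)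
  have hdiff (k : ℕ) (hk : k ≤ n) :
      DifferentiableOn ℝ (iteratedDerivWithin k (F 0) (Set.uIcc a x)) (Set.uIcc a x) :=
    (differentiableOn_congr (hiter k (by omega))).2 fun y hy ↦
      (hF k hk y hy).differentiableWithinAt
  have hcont : ContDiffOn ℝ n (F 0) (Set.uIcc a x) :=
    contDiffOn_of_differentiableOn_deriv (n := (n : ℕ∞)) fun k hk ↦ hdiff k (by exact_mod_cast hk)
  obtain ⟨ξ, hξ, hrem⟩ := taylor_mean_remainder_lagrange hax hcont
    ((hdiff n le_rfl).mono Set.Ioo_subset_Icc_self)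
  have hξ' : ξ ∈ Set.uIcc a x := Set.Ioo_subset_Icc_self hξ
  have htaylor : taylorWithinEval (F 0) n (Set.uIcc a x) a x =
      ∑ k ∈ Finset.range (n + 1), F k a * (x - a) ^ k / k.factorial := by
    rw [taylor_within_apply]
    refine Finset.sum_congr rfl fun k hk ↦ ?_
    rw [hiter k (Finset.mem_range.1 hk).le Set.left_mem_uIcc, smul_eq_mul]
    ring
  rw [← htaylor, hrem, hiter _ le_rfl hξ', abs_div, abs_mul, abs_pow, Nat.abs_cast]
  gcongr
  exact hM ξ hξ'

end Taylor

section JacobiPolynomial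

theorem jacobiP_neg (α β : ℝ) (d : ℕ) (x : ℝ) :
    jacobiP α β d (-x) = (-1) ^ d * jacobiP β α d x := by
  unfold jacobiP
  rw [← Finset.sum_range_reflect, Finset.mul_sum]
  refine Finset.sum_congr rfl fun k hk ↦ ?_
  have hkd : k ≤ d := Nat.lt_succ_iff.1 (Finset.mem_range.1 hk)
  have hleft : (-x - 1) / 2 = -1 * ((x + 1) / 2) := by ring
  have hright : (-x + 1) / 2 = -1 * ((x - 1) / 2) := by ring
  have hsign : (-1 : ℝ) ^ d = (-1) ^ (d - k) * (-1) ^ k := by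
    rw [← pow_add, Nat.sub_add_cancel hkd]
  rw [Nat.add_sub_cancel, Nat.sub_sub_self hkd, hleft, hright, mul_pow, mul_pow, hsign]
  ring

theorem maxRoot_self_nonneg (α : ℝ) (d : ℕ) : 0 ≤ maxRoot α α d := by
  rcases Set.eq_empty_or_nonempty {x : ℝ | jacobiP α α d x = 0} with hempty | ⟨x, hx⟩
  · rw [maxRoot, hempty, Real.sSup_empty]
  have hx_neg : jacobiP α α d (-x) = 0 := by rw [jacobiP_neg, hx.out, mul_zero]
  apply Real.sSup_nonneg'
  rcases le_total 0 x with h | h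
  · exact ⟨x, hx, h⟩
  · exact ⟨-x, hx_neg, neg_nonneg.2 h⟩

end JacobiPolynomial

section Arcsine

theorem hasDerivAt_arcsin_comp {u : ℝ → ℝ} {u' y : ℝ} (hu : HasDerivAt u u' y)
    (h : u y ^ 2 < 1) : HasDerivAt (fun t ↦ arcsin (u t)) (u' / √(1 - u y ^ 2)) y := by
  have hne : u y ≠ -1 ∧ u y ≠ 1 := by constructor <;> (intro huy; norm_num [huy] at h)
  exact ((hasDerivAt_arcsin hne.1 hne.2).comp y hu).congr_deriv (one_div_mul_eq_div _ _)

theorem hasDerivAt_arcsin_div {a y : ℝ} (ha : 0 < a) (h : y ^ 2 < a ^ 2) :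
    HasDerivAt (fun t ↦ arcsin (t / a)) (1 / √(a ^ 2 - y ^ 2)) y := by
  have hlt : (y / a) ^ 2 < 1 := by rwa [div_pow, div_lt_one (by positivity)]
  have hsqrt : √(1 - (y / a) ^ 2) = √(a ^ 2 - y ^ 2) / a := by
    rw [div_pow, one_sub_div (by positivity), sqrt_div' _ (sq_nonneg a), sqrt_sq ha.le]
  refine (hasDerivAt_arcsin_comp ((hasDerivAt_id y).div_const a) hlt).congr_deriv ?_
  simp only [id, hsqrt]
  field_simp

theorem hasDerivAt_div_sqrt_one_sub_sq {y : ℝ} (h : 0 < 1 - y ^ 2) :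
    HasDerivAt (fun t ↦ t / √(1 - t ^ 2)) (1 / ((1 - y ^ 2) * √(1 - y ^ 2))) y := by
  have hw := sqrt_pos.2 h
  have hw2 := sq_sqrt h.le
  refine ((hasDerivAt_id y).div (((hasDerivAt_pow 2 y).const_sub 1).sqrt h.ne')
    hw.ne').congr_deriv ?_
  simp only [id]
  field_simp
  rw [hw2]
  ring

theorem hasDerivAt_arcsin_mul_div_sqrt {m y : ℝ} (h : 0 < 1 - (1 + m ^ 2) * y ^ 2) :
    HasDerivAt (fun t ↦ arcsin (m * (t / √(1 - t ^ 2))))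
      (m / ((1 - y ^ 2) * √(1 - (1 + m ^ 2) * y ^ 2))) y := by
  have hy : 0 < 1 - y ^ 2 := by nlinarith [mul_nonneg (sq_nonneg m) (sq_nonneg y)]
  have hcos : 1 - (m * (y / √(1 - y ^ 2))) ^ 2 = (1 - (1 + m ^ 2) * y ^ 2) / (1 - y ^ 2) := by
    rw [mul_pow, div_pow, sq_sqrt hy.le]
    field_simp
    ring
  have hlt : (m * (y / √(1 - y ^ 2))) ^ 2 < 1 := by
    rw [← sub_pos, hcos]
    positivity
  refine (hasDerivAt_arcsin_comp ((hasDerivAt_div_sqrt_one_sub_sq hy).const_mul m)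
    hlt).congr_deriv ?_
  rw [hcos, sqrt_div' _ hy.le]
  field_simp

end Arcsine

section Phase

/-- The phase `ω_{d,α}` without the prefactor `√((d + α)(d + α + 1))`, as an odd smooth function
on `(-√(1 - q), √(1 - q))`. The arccosines in `omegada` only see `y²`, so the two agree only for
`0 ≤ y`. -/
def smoothPhase (q y : ℝ) : ℝ :=
  arcsin (y / √(1 - q)) - √q * arcsin (√q / √(1 - q) * (y / √(1 - y ^ 2)))

/-- The derivatives of `smoothPhase q` of orders `0, …, 3`, in closed form on the interval
`1 - q - y² > 0`. The value `0` at higher orders is junk. -/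
def phaseDeriv (q : ℝ) : ℕ → ℝ → ℝ
  | 0, y => smoothPhase q y
  | 1, y => √(1 - q - y ^ 2) / (1 - y ^ 2)
  | 2, y => y * (1 - 2 * q - y ^ 2) / (√(1 - q - y ^ 2) * (1 - y ^ 2) ^ 2)
  | 3, y => (1 - 2 * q - 3 * y ^ 2) / (√(1 - q - y ^ 2) * (1 - y ^ 2) ^ 2) +
      y ^ 2 * (1 - 2 * q - y ^ 2) / (√(1 - q - y ^ 2) ^ 3 * (1 - y ^ 2) ^ 2) +
      4 * y ^ 2 * (1 - 2 * q - y ^ 2) / (√(1 - q - y ^ 2) * (1 - y ^ 2) ^ 3)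
  | _, _ => 0

variable {q y : ℝ}

theorem omegada_eq_smoothPhase {d : ℕ} {α : ℝ} (hq : 0 ≤ qda d α) (hy : 0 ≤ y)
    (h : 0 < 1 - qda d α - y ^ 2) :
    omegada d α y = √((d + α) * (d + α + 1)) * smoothPhase (qda d α) y := by
  unfold omegada smoothPhase
  generalize qda d α = q at *
  have hq1 : 0 < 1 - q := by nlinarith [sq_nonneg y]
  have hy1 : 0 < 1 - y ^ 2 := by linarith
  have hfst : 1 - (y / √(1 - q)) ^ 2 = (1 - q - y ^ 2) / (1 - q) := by
    rw [div_pow, sq_sqrt hq1.le, one_sub_div hq1.ne']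
  have hsnd : 1 - (√q / √(1 - q) * (y / √(1 - y ^ 2))) ^ 2 =
      (1 - q - y ^ 2) / ((1 - q) * (1 - y ^ 2)) := by
    rw [mul_pow, div_pow, div_pow, sq_sqrt hq1.le, sq_sqrt hy1.le, sq_sqrt hq]
    field_simp
    ring
  rw [arcsin_eq_arccos (by positivity), arcsin_eq_arccos (by positivity), hfst, hsnd]

theorem hasDerivAt_smoothPhase (hq : 0 ≤ q) (h : 0 < 1 - q - y ^ 2) :
    HasDerivAt (smoothPhase q) (phaseDeriv q 1 y) y := by
  have hq1 : 0 < 1 - q := by nlinarith [sq_nonneg y]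
  have hy1 : 0 < 1 - y ^ 2 := by linarith
  have ha := sqrt_pos.2 hq1
  have hscale : 1 - (1 + (√q / √(1 - q)) ^ 2) * y ^ 2 = (1 - q - y ^ 2) / (1 - q) := by
    rw [div_pow, sq_sqrt hq, sq_sqrt hq1.le]
    field_simp
    ring
  have hfst := hasDerivAt_arcsin_div ha (y := y) (by rw [sq_sqrt hq1.le]; linarith)
  have hsnd := hasDerivAt_arcsin_mul_div_sqrt (m := √q / √(1 - q)) (y := y)
    (by rw [hscale]; positivity)
  refine (hfst.sub (hsnd.const_mul √q)).congr_deriv ?_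
  rw [hscale, sqrt_div' _ hq1.le, sq_sqrt hq1.le, phaseDeriv]
  field_simp
  rw [sq_sqrt hq, sq_sqrt h.le]
  ring

theorem hasDerivAt_phaseDeriv_one (hq : 0 ≤ q) (h : 0 < 1 - q - y ^ 2) :
    HasDerivAt (phaseDeriv q 1) (phaseDeriv q 2 y) y := by
  have hy1 : 0 < 1 - y ^ 2 := by linarith
  refine ((((hasDerivAt_pow 2 y).const_sub (1 - q)).sqrt h.ne').div
    ((hasDerivAt_pow 2 y).const_sub 1) hy1.ne').congr_deriv ?_
  rw [phaseDeriv]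
  field_simp
  rw [sq_sqrt h.le]
  ring

theorem hasDerivAt_phaseDeriv_two (hq : 0 ≤ q) (h : 0 < 1 - q - y ^ 2) :
    HasDerivAt (phaseDeriv q 2) (phaseDeriv q 3 y) y := by
  have hy1 : 0 < 1 - y ^ 2 := by linarith
  have hw := sqrt_pos.2 h
  have hnum := (hasDerivAt_id y).mul ((hasDerivAt_pow 2 y).const_sub (1 - 2 * q))
  have hden := (((hasDerivAt_pow 2 y).const_sub (1 - q)).sqrt h.ne').mul
    (((hasDerivAt_pow 2 y).const_sub 1).pow 2)
  refine (hnum.div hden (mul_pos hw (pow_pos hy1 2)).ne').congr_deriv ?_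
  simp only [phaseDeriv, id, Pi.mul_apply, Pi.pow_apply]
  field_simp
  push_cast
  ring

theorem hasDerivAt_phaseDeriv (hq : 0 ≤ q) (h : 0 < 1 - q - y ^ 2) :
    ∀ k ≤ 2, HasDerivAt (phaseDeriv q k) (phaseDeriv q (k + 1) y) y
  | 0, _ => hasDerivAt_smoothPhase hq h
  | 1, _ => hasDerivAt_phaseDeriv_one hq h
  | 2, _ => hasDerivAt_phaseDeriv_two hq h

theorem abs_phaseDeriv_three_le (hq : 0 ≤ q) (h : 0 < 1 - q - y ^ 2) :
    |phaseDeriv q 3 y| ≤ 8 / (√(1 - q - y ^ 2) ^ 3 * (1 - y ^ 2) ^ 3) := by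
  have hy := sq_nonneg y
  have hy1 : 0 < 1 - y ^ 2 := by linarith
  have hw := sqrt_pos.2 h
  have hw_le : √(1 - q - y ^ 2) ≤ 1 := sqrt_le_one.2 (by linarith)
  have hfac : |1 - 2 * q - y ^ 2| ≤ 1 := abs_le.2 ⟨by linarith, by linarith⟩
  have hprod : |y ^ 2 * (1 - 2 * q - y ^ 2)| ≤ 1 := by
    rw [abs_mul, abs_of_nonneg hy]
    exact mul_le_one₀ (by linarith) (abs_nonneg _) hfac
  set w := √(1 - q - y ^ 2)
  set D := 1 - y ^ 2
  have term_le {a c : ℝ} {i j : ℕ} (hi : i ≤ 3) (hj : j ≤ 3) (hac : |a| ≤ c) :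
      |a / (w ^ i * D ^ j)| ≤ c / (w ^ 3 * D ^ 3) := by
    rw [abs_div, abs_of_pos (a := w ^ i * D ^ j) (by positivity)]
    have := pow_le_pow_of_le_one hw.le hw_le hi
    have := pow_le_pow_of_le_one hy1.le (by linarith) hj
    have := (abs_nonneg a).trans hac
    gcongr
  have hfst : |(1 - 2 * q - 3 * y ^ 2) / (w * D ^ 2)| ≤ 3 / (w ^ 3 * D ^ 3) := by
    simpa using term_le (i := 1) (j := 2) (by norm_num) (by norm_num)
      (abs_le.2 ⟨by linarith, by linarith⟩)
  have hsnd : |y ^ 2 * (1 - 2 * q - y ^ 2) / (w ^ 3 * D ^ 2)| ≤ 1 / (w ^ 3 * D ^ 3) :=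
    term_le (i := 3) (j := 2) le_rfl (by norm_num) hprod
  have htrd : |4 * y ^ 2 * (1 - 2 * q - y ^ 2) / (w * D ^ 3)| ≤ 4 / (w ^ 3 * D ^ 3) := by
    have hnum : |4 * y ^ 2 * (1 - 2 * q - y ^ 2)| ≤ 4 := by
      rw [mul_assoc, abs_mul, abs_of_pos four_pos]
      linarith
    simpa using term_le (i := 1) (j := 3) (by norm_num) le_rfl hnum
  calc |phaseDeriv q 3 y| ≤ 3 / (w ^ 3 * D ^ 3) + 1 / (w ^ 3 * D ^ 3) + 4 / (w ^ 3 * D ^ 3) :=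
        (abs_add_three _ _ _).trans (by gcongr)
    _ = 8 / (w ^ 3 * D ^ 3) := by ring

variable {δ s x : ℝ}

theorem abs_smoothPhase_sub_taylor_le (hq : 0 < q) (hδ : 0 < δ) (hs : δ ≤ 1 - q - s ^ 2)
    (hx : δ ≤ 1 - q - x ^ 2) :
    |smoothPhase q x - (smoothPhase q s + phaseDeriv q 1 s * (x - s) +
        phaseDeriv q 2 s * (x - s) ^ 2 / 2)| ≤ 4 / 3 / (√δ ^ 3 * q ^ 3) * |x - s| ^ 3 := by
  have hconv : Convex ℝ {y : ℝ | y ^ 2 ≤ 1 - q - δ} := by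
    simpa using even_two.convexOn_pow.convex_le (1 - q - δ)
  have hsub (y : ℝ) (hy : y ∈ Set.uIcc s x) : δ ≤ 1 - q - y ^ 2 := by
    rw [← segment_eq_uIcc] at hy
    have hs2 : s ^ 2 ≤ 1 - q - δ := by linarith
    have hx2 : x ^ 2 ≤ 1 - q - δ := by linarith
    have hy2 : y ^ 2 ≤ 1 - q - δ := hconv.segment_subset hs2 hx2 hy
    linarith
  have hderiv (k : ℕ) (hk : k ≤ 2) (y : ℝ) (hy : y ∈ Set.uIcc s x) :=
    (hasDerivAt_phaseDeriv hq.le (hδ.trans_le (hsub y hy)) k hk).hasDerivWithinAt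
      (s := Set.uIcc s x)
  have hbound (y : ℝ) (hy : y ∈ Set.uIcc s x) : |phaseDeriv q 3 y| ≤ 8 / (√δ ^ 3 * q ^ 3) := by
    have hqy : q ≤ 1 - y ^ 2 := by linarith [hsub y hy]
    refine (abs_phaseDeriv_three_le hq.le (hδ.trans_le (hsub y hy))).trans ?_
    gcongr
    exact hsub y hy
  refine le_of_eq_of_le ?_ ((abs_sub_taylor_sum_le hderiv hbound).trans_eq ?_)
  · simp [Finset.sum_range_succ, phaseDeriv]
  · have hfact : ((2 + 1).factorial : ℝ) = 6 := by norm_num [Nat.factorial]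
    rw [hfact]
    ring

theorem abs_omegada_sub_taylor_le {d : ℕ} {α : ℝ} (hq : 0 < qda d α) (hδ : 0 < δ)
    (hs0 : 0 ≤ s) (hs : δ ≤ 1 - qda d α - s ^ 2) (hx0 : 0 ≤ x) (hx : δ ≤ 1 - qda d α - x ^ 2) :
    |omegada d α x - omegada d α s -
        √((d + α) * (d + α + 1)) * √(1 - qda d α - s ^ 2) / (1 - s ^ 2) * (x - s) -
        s * √((d + α) * (d + α + 1)) * (1 - 2 * qda d α - s ^ 2) /
          (2 * √(1 - qda d α - s ^ 2) * (1 - s ^ 2) ^ 2) * (x - s) ^ 2| ≤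
      √((d + α) * (d + α + 1)) * (4 / 3 / (√δ ^ 3 * qda d α ^ 3) * |x - s| ^ 3) := by
  rw [omegada_eq_smoothPhase hq.le hx0 (hδ.trans_le hx),
    omegada_eq_smoothPhase hq.le hs0 (hδ.trans_le hs)]
  have hws : 0 < √(1 - qda d α - s ^ 2) := sqrt_pos.2 (hδ.trans_le hs)
  have hs1 : 0 < 1 - s ^ 2 := by linarith
  set N := √((d + α) * (d + α + 1))
  calc _ = |N * (smoothPhase (qda d α) x - (smoothPhase (qda d α) s +
            phaseDeriv (qda d α) 1 s * (x - s) + phaseDeriv (qda d α) 2 s * (x - s) ^ 2 / 2))| := by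
        simp only [phaseDeriv]
        congr 1
        field_simp
        ring
    _ ≤ N * (4 / 3 / (√δ ^ 3 * qda d α ^ 3) * |x - s| ^ 3) := by
        rw [abs_mul, abs_of_nonneg (sqrt_nonneg _)]
        gcongr
        exact abs_smoothPhase_sub_taylor_le hq hδ hs hx

end Phase

section Scales

theorem sqrt_mul_add_one_le {p b : ℝ} (hp : -1 ≤ p) (hpb : p ≤ 2 * b) (hb : 1 ≤ b) :
    √(p * (p + 1)) ≤ 3 * b := by
  rw [sqrt_le_left (by positivity)]
  nlinarith

theorem sqrt_rpow_neg_two_thirds_pow_three {t : ℝ} (ht : 0 ≤ t) :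
    √(t ^ (-(2 : ℝ) / 3)) ^ 3 = t⁻¹ := by
  rw [sqrt_eq_rpow, ← rpow_mul ht, ← rpow_mul_natCast ht, ← rpow_neg_one]
  norm_num

theorem one_le_of_rpow_le_one {t r : ℝ} (ht : 0 < t) (hr : r < 0) (h : t ^ r ≤ 1) : 1 ≤ t := by
  contrapose! h
  exact one_lt_rpow_of_pos_of_lt_one_of_neg ht h hr

end Scales

theorem omega_taylor_expansion_at_max_root_general {K ε : ℝ} (hK : 1 ≤ K) (hε : 0 < ε) :
    ∃ C : ℝ, 0 < C ∧
      ∀ (n : ℝ) (d : ℕ) (α : ℝ), 0 < n → -1 < α → d ≤ K * n → α ≤ K * n → ε ≤ qda d α →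
        ∀ s x : ℝ, 0 ≤ s → n ^ (-(2 : ℝ) / 3) ≤ 1 - qda d α - s ^ 2 →
          0 ≤ x → n ^ (-(2 : ℝ) / 3) ≤ 1 - qda d α - x ^ 2 →
          |omegada d α x - omegada d α s -
              √((d + α) * (d + α + 1)) * √(1 - qda d α - s ^ 2) / (1 - s ^ 2) * (x - s) -
              s * √((d + α) * (d + α + 1)) * (1 - 2 * qda d α - s ^ 2) /
                (2 * √(1 - qda d α - s ^ 2) * (1 - s ^ 2) ^ 2) * (x - s) ^ 2| ≤
            C * n ^ 2 * |x - s| ^ 3 := by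
  refine ⟨4 * K / ε ^ 3, by positivity, ?_⟩
  intro n d α hn hα hdn hαn hεq s x hs0 hs hx0 hx
  have hq : 0 < qda d α := hε.trans_le hεq
  have hn1 : 1 ≤ n :=
    one_le_of_rpow_le_one hn (by norm_num) (hs.trans (by linarith [sq_nonneg s]))
  have hprefactor : √((d + α) * (d + α + 1)) ≤ 3 * (K * n) :=
    sqrt_mul_add_one_le (by linarith [d.cast_nonneg (α := ℝ)]) (by linarith)
      (one_le_mul_of_one_le_of_one_le hK hn1)
  calc _ ≤ √((d + α) * (d + α + 1)) *
          (4 / 3 / (√(n ^ (-(2 : ℝ) / 3)) ^ 3 * qda d α ^ 3) * |x - s| ^ 3) :=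
        abs_omegada_sub_taylor_le hq (rpow_pos_of_pos hn _) hs0 hs hx0 hx
    _ ≤ 3 * (K * n) * (4 / 3 / (n⁻¹ * ε ^ 3) * |x - s| ^ 3) := by
        rw [sqrt_rpow_neg_two_thirds_pow_three hn.le]
        gcongr
    _ = 4 * K / ε ^ 3 * n ^ 2 * |x - s| ^ 3 := by
        field_simp

/-- Uniform second-order Taylor expansion of `ω_{d,α}` at the largest
Jacobi root `s' = t_{1,d}^{α,α}`, with cubic error `C·n²·|x - s'|³`. -/
theorem omega_taylor_expansion_at_max_root
    (K : ℝ) (hK : 1 ≤ K) (ε : ℝ) (hε : ε ∈ Set.Ioo (0 : ℝ) 1) :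
    ∃ C : ℝ, 0 < C ∧
      ∀ (n d : ℕ) (α : ℝ), 0 < n → 2 ≤ d → Even d → Real.sqrt (7 / 6) ≤ α →
        (d : ℝ) ≤ K * n → α ≤ K * n → qda d α ∈ Set.Ico ε 1 →
        (n : ℝ) ^ (-(2 : ℝ) / 3) ≤ 1 - qda d α - maxRoot α α d ^ 2 →
        ∀ x ∈ Set.Icc (0 : ℝ) (Real.sqrt (1 - qda d α)),
          (n : ℝ) ^ (-(2 : ℝ) / 3) ≤ 1 - qda d α - x ^ 2 →
          |omegada d α x - omegada d α (maxRoot α α d) -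
              Real.sqrt (((d : ℝ) + α) * ((d : ℝ) + α + 1)) *
                  Real.sqrt (1 - qda d α - maxRoot α α d ^ 2) / (1 - maxRoot α α d ^ 2) *
                (x - maxRoot α α d) -
              maxRoot α α d * Real.sqrt (((d : ℝ) + α) * ((d : ℝ) + α + 1)) *
                  (1 - 2 * qda d α - maxRoot α α d ^ 2) /
                  (2 * Real.sqrt (1 - qda d α - maxRoot α α d ^ 2) *
                    (1 - maxRoot α α d ^ 2) ^ 2) *
                (x - maxRoot α α d) ^ 2| ≤
            C * (n : ℝ) ^ 2 * |x - maxRoot α α d| ^ 3 := by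
  obtain ⟨C, hC, hbound⟩ := omega_taylor_expansion_at_max_root_general hK hε.1
  refine ⟨C, hC, fun n d α hn _ _ hα hdn hαn hq hs x hx hxw ↦ ?_⟩
  exact hbound n d α (Nat.cast_pos.2 hn) (by linarith [sqrt_nonneg (7 / 6)]) hdn hαn hq.1
    (maxRoot α α d) x (maxRoot_self_nonneg α d) hs hx.1 hxw
end
end
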